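/- arXiv:1905.12380 — 2 statements merged into one kernel-verified Lean document; each statement's English description precedes it below -/
import Mathlib

section
/- Assume σ₁w₁′(r) = σ₂w₂′(r) > 0. Then: (i) if there exists s ∈ (−∞, r) such that w₁(s) = w₂(s) and w₁(ρ) < w₂(ρ) for every ρ ∈ (s, r), then w₁′(s) < 0 and w₂′(s) < 0; (ii) if there exists ℓ ∈ (r, ∞) such that w₁(ℓ) = w₂(ℓ) and w₁(ρ) > w₂(ρ) for every ρ ∈ (r, ℓ), then w₁′(ℓ) < 0 and w₂′(ℓ) < 0. -/
open Set

noncomputable section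

lemma aux_right (f : ℝ → ℝ) (d s r : ℝ) (hf : HasDerivAt f d s) (hsr : s < r) (h0 : f s = 0)
    (h : ∀ x ∈ Ioo s r, f x < 0) : d ≤ 0 := by
  have h1 : Filter.Tendsto (slope f s) (nhdsWithin s (Ioi s)) (nhds d) :=
    (hasDerivAt_iff_tendsto_slope.1 hf).mono_left
      (nhdsWithin_mono _ (fun x hx => ne_of_gt hx))
  refine le_of_tendsto h1 ?_
  filter_upwards [Ioo_mem_nhdsGT hsr] with x hx
  rw [slope_def_field, h0]
  have := h x hx
  exact div_nonpos_of_nonpos_of_nonneg (by linarith) (by linarith [hx.1])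

lemma aux_left (f : ℝ → ℝ) (d r l : ℝ) (hf : HasDerivAt f d l) (hrl : r < l) (h0 : f l = 0)
    (h : ∀ x ∈ Ioo r l, 0 < f x) : d ≤ 0 := by
  have h1 : Filter.Tendsto (slope f l) (nhdsWithin l (Iio l)) (nhds d) :=
    (hasDerivAt_iff_tendsto_slope.1 hf).mono_left
      (nhdsWithin_mono _ (fun x hx => ne_of_lt hx))
  refine le_of_tendsto h1 ?_
  filter_upwards [Ioo_mem_nhdsLT hrl] with x hx
  rw [slope_def_field, h0]
  have := h x hx
  exact div_nonpos_of_nonneg_of_nonpos (by linarith) (by linarith [hx.2])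

lemma aux_fin (σ₁ σ₂ a b : ℝ) (hσ₁ : 0 < σ₁) (hσ₁₂ : σ₁ < σ₂) (hab : a - b ≤ 0)
    (h : 0 < σ₁ * a - σ₂ * b) : a < 0 ∧ b < 0 := by
  have hb : b < 0 := by
    by_contra hb
    push Not at hb
    nlinarith
  refine ⟨by linarith, hb⟩

/-- **Proposition A.1(1) (ODE comparison, positive flux case).** -/
theorem stmt_14 (σ₁ σ₂ : ℝ) (hσ₁ : 0 < σ₁) (hσ₁₂ : σ₁ < σ₂)
    (w₁ w₂ : ℝ → ℝ)
    (hw₁ : Differentiable ℝ w₁) (hw₁' : Differentiable ℝ (deriv w₁))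
    (hw₂ : Differentiable ℝ w₂) (hw₂' : Differentiable ℝ (deriv w₂))
    (heq₁ : ∀ ρ : ℝ, σ₁ * deriv (deriv w₁) ρ = w₁ ρ)
    (heq₂ : ∀ ρ : ℝ, σ₂ * deriv (deriv w₂) ρ = w₂ ρ)
    (r : ℝ) (hval : w₁ r = w₂ r)
    (hflux : σ₁ * deriv w₁ r = σ₂ * deriv w₂ r) (hpos : 0 < σ₁ * deriv w₁ r) :
    (∀ s : ℝ, s < r → w₁ s = w₂ s → (∀ ρ ∈ Ioo s r, w₁ ρ < w₂ ρ) →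
      deriv w₁ s < 0 ∧ deriv w₂ s < 0) ∧
    (∀ l : ℝ, r < l → w₁ l = w₂ l → (∀ ρ ∈ Ioo r l, w₁ ρ > w₂ ρ) →
      deriv w₁ l < 0 ∧ deriv w₂ l < 0) := by
  have hd : ∀ x, HasDerivAt (fun y => w₁ y - w₂ y) (deriv w₁ x - deriv w₂ x) x := fun x =>
    (hw₁ x).hasDerivAt.sub (hw₂ x).hasDerivAt
  have hP : ∀ x, HasDerivAt (fun y => σ₁ * deriv w₁ y - σ₂ * deriv w₂ y) (w₁ x - w₂ x) x := by
    intro x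
    have := ((hw₁' x).hasDerivAt.const_mul σ₁).sub ((hw₂' x).hasDerivAt.const_mul σ₂)
    rw [heq₁, heq₂] at this
    exact this
  have hc : Continuous (fun y => σ₁ * deriv w₁ y - σ₂ * deriv w₂ y) :=
    continuous_iff_continuousAt.2 fun x => (hP x).continuousAt
  constructor
  · intro s hs h0 h
    refine aux_fin σ₁ σ₂ _ _ hσ₁ hσ₁₂
      (aux_right _ _ s r (hd s) hs (by simp [h0]) (fun x hx => by linarith [h x hx])) ?_
    obtain ⟨c, hcm, hce⟩ := exists_hasDerivAt_eq_slope _ _ hs hc.continuousOn (fun x _ => hP x)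
    have h2 := h c hcm
    rw [eq_div_iff (by linarith)] at hce
    nlinarith
  · intro l hl h0 h
    refine aux_fin σ₁ σ₂ _ _ hσ₁ hσ₁₂
      (aux_left _ _ r l (hd l) hl (by simp [h0]) (fun x hx => by linarith [h x hx])) ?_
    obtain ⟨c, hcm, hce⟩ := exists_hasDerivAt_eq_slope _ _ hl hc.continuousOn (fun x _ => hP x)
    have h2 := h c hcm
    rw [eq_div_iff (by linarith)] at hce
    nlinarith
end
end

section
/- Let 0 < r₁ ≤ r₂ < ∞ and let σ_c, σ_s be positive constants with σ_c ≠ σ_s. For j = 1, 2 let w_j : [0,∞) → ℝ be bounded continuous functions that are C² on [0, r_j] and on [r_j, ∞), satisfy −σ_s w_j″ + w_j = 0 on (0, r_j) and −σ_c w_j″ + w_j = 0 on (r_j, ∞), and satisfy the transmission condition σ_s w_j′(r_j − 0) = σ_c w_j′(r_j + 0). If w₁(0) = w₂(0), w₁′(0) = w₂′(0), and either w₁(0) ≠ 0 or w₁′(0) ≠ 0, then r₁ = r₂ and w₁ ≡ w₂ on [0,∞). -/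
open Set

noncomputable section

/-- `w` is a bounded solution of `-(σ w′)′ + w = 0` on `[0,∞)` for the piecewise
constant conductivity equal to `σ_s` on `[0, r]` and `σ_c` on `(r, ∞)`, with the
transmission condition `σ_s w′(r − 0) = σ_c w′(r + 0)` at the interface `r`. -/
def PiecewiseSol (σs σc r : ℝ) (w : ℝ → ℝ) : Prop :=
  ContinuousOn w (Ici 0) ∧
  (∃ C, ∀ ρ ∈ Ici (0:ℝ), |w ρ| ≤ C) ∧
  ContDiffOn ℝ 2 w (Icc 0 r) ∧ ContDiffOn ℝ 2 w (Ici r) ∧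
  (∀ ρ ∈ Ioo 0 r,
    σs * derivWithin (derivWithin w (Icc 0 r)) (Icc 0 r) ρ = w ρ) ∧
  (∀ ρ ∈ Ioi r,
    σc * derivWithin (derivWithin w (Ici r)) (Ici r) ρ = w ρ) ∧
  σs * derivWithin w (Icc 0 r) r = σc * derivWithin w (Ici r) r

/-- First-order factor: `v + k w` is a pure exponential. -/
lemma aux_exp (σ k a b : ℝ) (hk : σ * k ^ 2 = 1) (S : Set ℝ) (hS : UniqueDiffOn ℝ S)
    (w : ℝ → ℝ) (hw : ContDiffOn ℝ 2 w S) (hab : Icc a b ⊆ S)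
    (hode : ∀ x ∈ Ioo a b, σ * derivWithin (derivWithin w S) S x = w x) (h : a ≤ b) :
    derivWithin w S b + k * w b
      = (derivWithin w S a + k * w a) * Real.exp (k * (b - a)) := by
  rcases h.eq_or_lt with rfl | h
  · simp
  have hv : ContDiffOn ℝ 1 (derivWithin w S) S := hw.derivWithin hS (by norm_num)
  have hw' : DifferentiableOn ℝ w S := hw.differentiableOn (by norm_num)
  have hv' : DifferentiableOn ℝ (derivWithin w S) S := hv.differentiableOn (by norm_num)
  obtain ⟨c, hc, hc2⟩ := exists_hasDerivAt_eq_slope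
    (fun x => (derivWithin w S x + k * w x) * Real.exp (-(k * (x - a)))) (fun _ => 0) h
    (by
      have h1 := hw.continuousOn.mono hab
      have h2 := hv.continuousOn.mono hab
      fun_prop)
    (by
      intro x hx
      have hxS : S ∈ nhds x :=
        Filter.mem_of_superset (Ioo_mem_nhds hx.1 hx.2) (Ioo_subset_Icc_self.trans hab)
      have hx0 : x ∈ S := mem_of_mem_nhds hxS
      have d1 := (hw' x hx0).hasDerivWithinAt.hasDerivAt hxS
      have d2 := (hv' x hx0).hasDerivWithinAt.hasDerivAt hxS
      have d3 : HasDerivAt (fun x => Real.exp (-(k * (x - a))))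
          (Real.exp (-(k * (x - a))) * (-(k * 1))) x :=
        ((((hasDerivAt_id x).sub_const a).const_mul k).neg).exp
      have d4 := (d2.add (d1.const_mul k)).mul d3
      refine d4.congr_deriv ?_
      have e : derivWithin (derivWithin w S) S x = k ^ 2 * w x := by
        rw [← hode x hx]; linear_combination (-derivWithin (derivWithin w S) S x) * hk
      simp only [Pi.add_apply]
      rw [e]; ring)
  have hba : b - a ≠ 0 := (sub_pos.2 h).ne'
  rw [eq_div_iff hba] at hc2
  simp only [sub_self, mul_zero, neg_zero, Real.exp_zero, mul_one, zero_mul] at hc2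
  have : derivWithin w S a + k * w a
      = (derivWithin w S b + k * w b) * Real.exp (-(k * (b - a))) := by linarith
  rw [this, mul_assoc, ← Real.exp_add]; simp

/-- Bounded solutions on the half-line decay. -/
lemma aux_decay (σ m r C : ℝ) (hm : 0 < m) (hk : σ * m ^ 2 = 1) (w : ℝ → ℝ)
    (hw : ContDiffOn ℝ 2 w (Ici r)) (hC : ∀ x ∈ Ici r, |w x| ≤ C)
    (hode : ∀ x ∈ Ioi r, σ * derivWithin (derivWithin w (Ici r)) (Ici r) x = w x) :
    derivWithin w (Ici r) r = -m * w r ∧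
      ∀ x ∈ Ici r, w x = w r * Real.exp (-m * (x - r)) := by
  have hp : ∀ x ∈ Ici r, _ := fun x hx => aux_exp σ m r x hk (Ici r) (uniqueDiffOn_Ici r) w hw
    Icc_subset_Ici_self (fun y hy => hode y hy.1) hx
  have hq : ∀ x ∈ Ici r, _ := fun x hx => aux_exp σ (-m) r x (by rw [neg_sq, hk]) (Ici r)
    (uniqueDiffOn_Ici r) w hw Icc_subset_Ici_self (fun y hy => hode y hy.1) hx
  set P := derivWithin w (Ici r) r + m * w r with hP
  set Q := derivWithin w (Ici r) r + -m * w r with hQ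
  have hP0 : P = 0 := by
    by_contra hne
    have hpos : 0 < |P| := abs_pos.2 hne
    set t := (2 * m * C + |Q|) / |P| with ht
    have hC0 : 0 ≤ C := (abs_nonneg _).trans (hC r self_mem_Ici)
    have ht0 : 0 ≤ t := by positivity
    have hx : r + t / m ∈ Ici r := by simp only [mem_Ici]; have := div_nonneg ht0 hm.le; linarith
    have e1 := hp _ hx
    have e2 := hq _ hx
    have e3 : m * (r + t / m - r) = t := by field_simp; ring
    have e4 : -m * (r + t / m - r) = -t := by linarith
    rw [e3] at e1; rw [e4] at e2
    have e5 : P * Real.exp t = 2 * m * w (r + t / m) + Q * Real.exp (-t) := by linarith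
    have e6 : |P| * Real.exp t ≤ 2 * m * C + |Q| := by
      calc |P| * Real.exp t = |P * Real.exp t| := by rw [abs_mul, Real.abs_exp]
        _ ≤ |2 * m * w (r + t / m)| + |Q * Real.exp (-t)| := by rw [e5]; exact abs_add_le _ _
        _ = 2 * m * |w (r + t / m)| + |Q| * Real.exp (-t) := by
          rw [abs_mul, abs_mul Q, Real.abs_exp, abs_of_pos (by positivity : 0 < 2 * m)]
        _ ≤ 2 * m * C + |Q| * 1 := by
          gcongr
          · exact hC _ hx
          · exact Real.exp_le_one_iff.2 (by linarith)
        _ = _ := by ring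
    have e7 : |P| * t = 2 * m * C + |Q| := by rw [ht]; field_simp
    have e8 := Real.add_one_le_exp t
    nlinarith
  refine ⟨by linarith, fun x hx => ?_⟩
  have e1 := hp x hx
  have e2 := hq x hx
  rw [hP0, zero_mul] at e1
  have : Q = -(2 * m) * w r := by linarith
  rw [this] at e2
  have : (2 * m) * w x = (2 * m) * (w r * Real.exp (-m * (x - r))) := by linarith
  exact mul_left_cancel₀ (by positivity) this

/-- Full description of a solution from its Cauchy data at `0`. -/
lemma aux_sol (s c r : ℝ) (hs : 0 < s) (hc : 0 < c) (hr : 0 < r) (w : ℝ → ℝ)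
    (h : PiecewiseSol (s ^ 2) (c ^ 2) r w) (p q : ℝ)
    (hp : derivWithin w (Icc 0 r) 0 + s⁻¹ * w 0 = p)
    (hq : derivWithin w (Icc 0 r) 0 + -s⁻¹ * w 0 = q) :
    (∀ x ∈ Icc 0 r, 2 * w x = s * (p * Real.exp (s⁻¹ * x) - q * Real.exp (-s⁻¹ * x))) ∧
    (∀ x ∈ Ici r, w x = w r * Real.exp (-c⁻¹ * (x - r))) ∧
    (s + c) * p * Real.exp (s⁻¹ * r) = (c - s) * q * Real.exp (-s⁻¹ * r) := by
  obtain ⟨-, ⟨C, hC⟩, hw1, hw2, ho1, ho2, htr⟩ := h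
  have hp' : ∀ x ∈ Icc 0 r, _ := fun x hx => aux_exp (s ^ 2) s⁻¹ 0 x (by field_simp) (Icc 0 r)
    (uniqueDiffOn_Icc hr) w hw1 (Icc_subset_Icc_right hx.2)
    (fun y hy => ho1 y ⟨hy.1, hy.2.trans_le hx.2⟩) hx.1
  have hq' : ∀ x ∈ Icc 0 r, _ := fun x hx => aux_exp (s ^ 2) (-s⁻¹) 0 x (by field_simp) (Icc 0 r)
    (uniqueDiffOn_Icc hr) w hw1 (Icc_subset_Icc_right hx.2)
    (fun y hy => ho1 y ⟨hy.1, hy.2.trans_le hx.2⟩) hx.1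
  simp only [hp, hq, sub_zero] at hp' hq'
  obtain ⟨d1, d2⟩ := aux_decay (c ^ 2) c⁻¹ r C (by positivity) (by field_simp) w hw2
    (fun x hx => hC x (hr.le.trans hx)) ho2
  have key : ∀ x ∈ Icc 0 r,
      2 * w x = s * (p * Real.exp (s⁻¹ * x) - q * Real.exp (-s⁻¹ * x)) := by
    intro x hx
    rw [← hp' x hx, ← hq' x hx]; field_simp; ring
  refine ⟨key, d2, ?_⟩
  have hrr : r ∈ Icc 0 r := ⟨hr.le, le_rfl⟩
  rw [d1] at htr
  have e1 := hp' r hrr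
  have e2 := hq' r hrr
  rw [mul_assoc, mul_assoc, ← e1, ← e2]
  have e3 : s ^ 2 * derivWithin w (Icc 0 r) r = -c * w r := by
    rw [htr]; field_simp
  have e4 : derivWithin w (Icc 0 r) r = -c * w r / s ^ 2 := by
    rw [← e3]; field_simp
  rw [e4]; field_simp; ring

/-- **Proposition A.2 (unique determination of the interface from Cauchy data).** -/
theorem stmt_17 (σc σs : ℝ) (hσc : 0 < σc) (hσs : 0 < σs) (hne : σc ≠ σs)
    (r₁ r₂ : ℝ) (hr₁ : 0 < r₁) (hr₁₂ : r₁ ≤ r₂)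
    (w₁ w₂ : ℝ → ℝ)
    (h₁ : PiecewiseSol σs σc r₁ w₁) (h₂ : PiecewiseSol σs σc r₂ w₂)
    (hval : w₁ 0 = w₂ 0)
    (hder : derivWithin w₁ (Icc 0 r₁) 0 = derivWithin w₂ (Icc 0 r₂) 0)
    (hnontriv : w₁ 0 ≠ 0 ∨ derivWithin w₁ (Icc 0 r₁) 0 ≠ 0) :
    r₁ = r₂ ∧ ∀ ρ ∈ Ici (0:ℝ), w₁ ρ = w₂ ρ := by
  obtain ⟨s, hs, rfl⟩ : ∃ s, 0 < s ∧ s ^ 2 = σs :=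
    ⟨√σs, Real.sqrt_pos.2 hσs, Real.sq_sqrt hσs.le⟩
  obtain ⟨c, hc, rfl⟩ : ∃ s, 0 < s ∧ s ^ 2 = σc :=
    ⟨√σc, Real.sqrt_pos.2 hσc, Real.sq_sqrt hσc.le⟩
  have hcs : c - s ≠ 0 := by
    intro h
    exact hne (by rw [sub_eq_zero.1 h])
  obtain ⟨p, hp⟩ : ∃ p, derivWithin w₁ (Icc 0 r₁) 0 + s⁻¹ * w₁ 0 = p := ⟨_, rfl⟩
  obtain ⟨q, hq⟩ : ∃ q, derivWithin w₁ (Icc 0 r₁) 0 + -s⁻¹ * w₁ 0 = q := ⟨_, rfl⟩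
  obtain ⟨a1, b1, c1⟩ := aux_sol s c r₁ hs hc hr₁ w₁ h₁ p q hp hq
  obtain ⟨a2, b2, c2⟩ := aux_sol s c r₂ hs hc (hr₁.trans_le hr₁₂) w₂ h₂ p q
    (by rw [← hder, ← hval, hp]) (by rw [← hder, ← hval, hq])
  have hq0 : q ≠ 0 := by
    rintro rfl
    have hp0 : p = 0 := by
      have : s + c ≠ 0 := by positivity
      simpa [this, Real.exp_ne_zero] using c1
    have hd : derivWithin w₁ (Icc 0 r₁) 0 = 0 := by linarith
    rw [hd, hp0, zero_add] at hp
    rcases hnontriv with h | h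
    · exact (mul_ne_zero (inv_ne_zero hs.ne') h) hp
    · exact h hd
  have hK : (c - s) * q ≠ 0 := mul_ne_zero hcs hq0
  have hrr : r₁ = r₂ := by
    have f : ∀ r, (s + c) * p * Real.exp (s⁻¹ * r) = (c - s) * q * Real.exp (-s⁻¹ * r) →
        (s + c) * p = (c - s) * q * Real.exp (-s⁻¹ * r + -(s⁻¹ * r)) := by
      intro r h
      rw [Real.exp_add, ← mul_assoc, ← h, mul_assoc, ← Real.exp_add]; simp
    have e := mul_left_cancel₀ hK ((f _ c1).symm.trans (f _ c2))
    have e' := Real.exp_injective e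
    have : s⁻¹ * r₁ = s⁻¹ * r₂ := by linarith
    exact mul_left_cancel₀ (inv_ne_zero hs.ne') this
  subst hrr
  have hin : ∀ x ∈ Icc 0 r₁, w₁ x = w₂ x := fun x hx => by
    have := a1 x hx
    have := a2 x hx
    linarith
  refine ⟨rfl, fun x hx => ?_⟩
  rcases le_total x r₁ with h | h
  · exact hin x ⟨hx, h⟩
  · rw [b1 x h, b2 x h, hin r₁ ⟨hr₁.le, le_rfl⟩]
end
end
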